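/- arXiv:1512.05937 — 2 statements merged into one kernel-verified Lean document; each statement's English description precedes it below -/
import Mathlib

section
/- Let M be the ℂ-linear endomorphism of the polynomial ring ℂ[X] given by multiplication by X and D the ℂ-linear endomorphism given by the formal derivative. For all m, n, r, s ∈ ℕ: M^m ∘ D^n ∘ M^r ∘ D^s = Σ_{i=0}^{min(n,r)} i!·C(n,i)·C(r,i)·M^{m+r−i} ∘ D^{n+s−i}, where C(·,·) denotes the binomial coefficient. -/
/-- multiplication by X on ℂ[X] -/
noncomputable def MX : Module.End ℂ (Polynomial ℂ) := LinearMap.mulLeft ℂ Polynomial.X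

/-- the formal derivative on ℂ[X] -/
noncomputable def DX : Module.End ℂ (Polynomial ℂ) := Polynomial.derivative

theorem MX_pow_apply (k : ℕ) (p : Polynomial ℂ) : (MX ^ k) p = p * Polynomial.X ^ k := by
  rw [MX, LinearMap.pow_mulLeft, LinearMap.mulLeft_apply, mul_comm]

theorem DX_pow_apply (k : ℕ) (p : Polynomial ℂ) :
    (DX ^ k) p = Polynomial.derivative^[k] p := by
  rw [Module.End.pow_apply]; rfl

/-- the normal ordering formula
`M^m ∘ D^n ∘ M^r ∘ D^s = Σ_{i=0}^{min(n,r)} i!·C(n,i)·C(r,i)·M^{m+r−i} ∘ D^{n+s−i}`. -/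
theorem normal_ordering_formula (m n r s : ℕ) :
    MX ^ m * DX ^ n * MX ^ r * DX ^ s =
      ∑ i ∈ Finset.range (min n r + 1),
        (Nat.factorial i * Nat.choose n i * Nat.choose r i) •
          (MX ^ (m + r - i) * DX ^ (n + s - i)) := by
  refine LinearMap.ext fun p => ?_
  rw [LinearMap.sum_apply]
  simp only [Module.End.mul_apply, LinearMap.smul_apply, MX_pow_apply, DX_pow_apply]
  rw [Polynomial.iterate_derivative_mul_X_pow, Finset.sum_mul, min_comm r n]
  refine Finset.sum_congr rfl fun i hi => ?_
  have h : i ≤ min n r := Nat.lt_succ_iff.mp (Finset.mem_range.mp hi)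
  have h1 : i ≤ n := h.trans (min_le_left _ _)
  have h2 : i ≤ r := h.trans (min_le_right _ _)
  rw [← Function.iterate_add_apply, smul_mul_assoc, mul_assoc, ← pow_add,
    Nat.descFactorial_eq_factorial_mul_choose,
    show n - i + s = n + s - i by omega, show r - i + m = m + r - i by omega]
  congr 1
  ring
end

section
/- WSym is free as an associative ℂ-algebra on the set of indivisible set partitions: the unique unital ℂ-algebra morphism from the free associative ℂ-algebra on the set of indivisible set partitions to WSym sending each indivisible set partition π to M_π is an isomorphism of algebras. -/
open scoped TensorProduct

/-- set partitions of `{1,…,n}` for some `n` -/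
def IsSP (π : Finset (Finset ℕ)) : Prop :=
  ∅ ∉ π ∧ (∀ b ∈ π, ∀ b' ∈ π, b ≠ b' → Disjoint b b') ∧
  ∃ n : ℕ, π.biUnion id = Finset.Icc 1 n

/-- the type of set partitions -/
abbrev SP := {π : Finset (Finset ℕ) // IsSP π}

/-- the underlying space of `WSym`: the free ℂ-vector space on set partitions -/
abbrev WS := SP →₀ ℂ

theorem empty_isSP : IsSP ∅ :=
  ⟨by simp, by simp, 0, by rw [Finset.biUnion_empty]; exact (Finset.Icc_eq_empty (by norm_num)).symm⟩

/-- the integer `n` such that `π ⊨ n` -/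
def spn (π : Finset (Finset ℕ)) : ℕ := (π.biUnion id).card

def shiftSP (n : ℕ) (π : Finset (Finset ℕ)) : Finset (Finset ℕ) :=
  π.image fun b => b.image (· + n)

/-- `π ⊎ π'` -/
def uplusSP (π π' : Finset (Finset ℕ)) : Finset (Finset ℕ) := π ∪ shiftSP (spn π) π'

/-- indivisible set partitions -/
def IndivSP (π : Finset (Finset ℕ)) : Prop :=
  π ≠ ∅ ∧ ∀ π₁ π₂ : Finset (Finset ℕ), IsSP π₁ → IsSP π₂ → π = uplusSP π₁ π₂ →
    π₁ = π ∨ π₂ = π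

/-- a partial matching between the blocks of `π` and those of `πs` -/
def MatchSP (π πs : Finset (Finset ℕ)) (m : Finset (Finset ℕ × Finset ℕ)) : Prop :=
  (∀ p ∈ m, p.1 ∈ π ∧ p.2 ∈ πs) ∧
  (∀ p ∈ m, ∀ q ∈ m, (p.1 = q.1 ∨ p.2 = q.2) → p = q)

open scoped Classical in
noncomputable def matchingsSP (π πs : Finset (Finset ℕ)) :
    Finset (Finset (Finset ℕ × Finset ℕ)) :=
  (π ×ˢ πs).powerset.filter fun m => MatchSP π πs m

/-- merge the matched pairs of blocks -/
def mergeSP (π πs : Finset (Finset ℕ)) (m : Finset (Finset ℕ × Finset ℕ)) :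
    Finset (Finset ℕ) :=
  ((π \ m.image Prod.fst) ∪ (πs \ m.image Prod.snd)) ∪ m.image fun p => p.1 ∪ p.2

open scoped Classical in
noncomputable def mkSP (π : Finset (Finset ℕ)) : WS :=
  if h : IsSP π then Finsupp.single ⟨π, h⟩ 1 else 0

noncomputable def unitW : WS := Finsupp.single ⟨∅, empty_isSP⟩ 1

noncomputable def liftW {V : Type*} [AddCommMonoid V] [Module ℂ V] (f : SP → V) :
    WS →ₗ[ℂ] V :=
  Finsupp.lsum ℂ fun π => LinearMap.toSpanSingleton ℂ V (f π)

/-- `M_π · M_π'`: the sum over all ways of merging blocks of `π` with blocks of the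
shifted `π'` along a partial matching -/
noncomputable def mulfunSP (π π' : SP) : WS :=
  ∑ m ∈ matchingsSP π.1 (shiftSP (spn π.1) π'.1),
    mkSP (mergeSP π.1 (shiftSP (spn π.1) π'.1) m)

/-- the product of `WSym` -/
noncomputable def mulW : WS →ₗ[ℂ] WS →ₗ[ℂ] WS := liftW fun π => liftW fun π' => mulfunSP π π'

/-- standardization of a set of blocks -/
def stdSP (e : Finset (Finset ℕ)) : Finset (Finset ℕ) :=
  e.image fun b => b.image fun x => ((e.biUnion id).filter (· ≤ x)).card

open scoped Classical in
noncomputable def dfunSP (π : SP) : WS ⊗[ℂ] WS :=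
  ∑ e ∈ π.1.powerset, mkSP (stdSP e) ⊗ₜ[ℂ] mkSP (stdSP (π.1 \ e))

/-- the coproduct of `WSym` -/
noncomputable def deltaW : WS →ₗ[ℂ] WS ⊗[ℂ] WS := liftW dfunSP

/-- the counit of `WSym` -/
noncomputable def counitW : WS →ₗ[ℂ] ℂ := liftW fun π => if π.1 = ∅ then (1 : ℂ) else 0

/-- the set of indivisible set partitions -/
abbrev GSP := {π : SP // IndivSP π.1}

/-- product in `WSym` of a word of indivisible set partitions -/
noncomputable def wordProdW (l : List GSP) : WS :=
  (l.map fun g => (Finsupp.single g.1 1 : WS)).foldr (fun x acc => mulW x acc) unitW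

/-- the linear extension of `wordProdW`, i.e. the unique unital algebra morphism from
the free associative ℂ-algebra on the indivisible set partitions (realized as the
vector space with basis the words over them) to `WSym`, sending each generator `π`
to `M_π`. -/
noncomputable def PsiW : (List GSP →₀ ℂ) →ₗ[ℂ] WS :=
  Finsupp.lsum ℂ fun w => LinearMap.toSpanSingleton ℂ WS (wordProdW w)

/-! auxiliary material -/

def PartOn (L : Finset ℕ) (π : Finset (Finset ℕ)) : Prop :=
  ∅ ∉ π ∧ (∀ b ∈ π, ∀ b' ∈ π, b ≠ b' → Disjoint b b') ∧ π.biUnion id = L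

theorem PartOn.sub {L π} (h : PartOn L π) {b} (hb : b ∈ π) : b ⊆ L := by
  rw [← h.2.2]; exact Finset.subset_biUnion_of_mem id hb

theorem PartOn.ne {L π} (h : PartOn L π) {b} (hb : b ∈ π) : ∃ x, x ∈ b := by
  by_contra hc
  push Not at hc
  have : b = ∅ := Finset.eq_empty_of_forall_notMem hc
  exact h.1 (this ▸ hb)

theorem PartOn.ex {L π} (h : PartOn L π) {x} (hx : x ∈ L) : ∃ b ∈ π, x ∈ b := by
  rw [← h.2.2] at hx; simpa using hx

theorem PartOn.eq {L π} (h : PartOn L π) {b c x} (hb : b ∈ π) (hc : c ∈ π) (h1 : x ∈ b)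
    (h2 : x ∈ c) : b = c := by
  by_contra hne
  exact Finset.disjoint_left.1 (h.2.1 b hb c hc hne) h1 h2

theorem PartOn.mk' {L π} (h1 : ∅ ∉ π) (h2 : ∀ b ∈ π, ∀ c ∈ π, ∀ x, x ∈ b → x ∈ c → b = c)
    (h3 : ∀ b ∈ π, ∀ x ∈ b, x ∈ L) (h4 : ∀ x ∈ L, ∃ b ∈ π, x ∈ b) : PartOn L π := by
  refine ⟨h1, fun b hb c hc hne => Finset.disjoint_left.2 fun x hx hx' =>
    hne (h2 b hb c hc x hx hx'), ?_⟩
  ext x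
  simp only [Finset.mem_biUnion, id]
  exact ⟨fun ⟨b, hb, hx⟩ => h3 b hb x hx, h4 x⟩

theorem IsSP.part {π} (h : IsSP π) : PartOn (Finset.Icc 1 (spn π)) π := by
  obtain ⟨h1, h2, n, h3⟩ := h
  refine ⟨h1, h2, ?_⟩
  have : spn π = n := by rw [spn, h3]; simp
  rw [this, h3]

theorem PartOn.isSP {n π} (h : PartOn (Finset.Icc 1 n) π) : IsSP π := ⟨h.1, h.2.1, n, h.2.2⟩

theorem PartOn.spn {n π} (h : PartOn (Finset.Icc 1 n) π) : spn π = n := by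
  rw [_root_.spn, h.2.2]; simp

def trX (L : Finset ℕ) (ρ : Finset (Finset ℕ)) : Finset (Finset ℕ) :=
  (ρ.image (· ∩ L)).erase ∅

theorem mem_trX {L ρ c} : c ∈ trX L ρ ↔ (∃ x, x ∈ c) ∧ ∃ b ∈ ρ, b ∩ L = c := by
  simp only [trX, Finset.mem_erase, Finset.mem_image, ← Finset.nonempty_iff_ne_empty]
  rfl

theorem mem_merge {π πs m c} : c ∈ mergeSP π πs m ↔
    (c ∈ π ∧ ∀ p ∈ m, p.1 ≠ c) ∨ (c ∈ πs ∧ ∀ p ∈ m, p.2 ≠ c) ∨ ∃ p ∈ m, p.1 ∪ p.2 = c := by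
  simp only [mergeSP, Finset.mem_union, Finset.mem_sdiff, Finset.mem_image, not_exists, not_and,
    or_assoc, ne_eq]

section
variable {L H : Finset ℕ} {π πs : Finset (Finset ℕ)} {m : Finset (Finset ℕ × Finset ℕ)}

theorem PartOn.inter_right (hs : PartOn H πs) (hd : Disjoint L H) {b} (hb : b ∈ πs) :
    b ∩ L = ∅ :=
  Finset.disjoint_iff_inter_eq_empty.1 (Finset.disjoint_of_subset_left (hs.sub hb) hd.symm)

theorem PartOn.inter_left (hs : PartOn L π) {b} (hb : b ∈ π) : b ∩ L = b :=
  Finset.inter_eq_left.2 (hs.sub hb)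

theorem match_swap (hm : MatchSP π πs m) : MatchSP πs π (m.image Prod.swap) := by
  constructor
  · simp only [Finset.mem_image]
    rintro p ⟨q, hq, rfl⟩
    exact (hm.1 q hq).symm
  · simp only [Finset.mem_image]
    rintro p ⟨q, hq, rfl⟩ p' ⟨q', hq', rfl⟩ h
    rw [hm.2 q hq q' hq' h.symm]

theorem merge_swap : mergeSP πs π (m.image Prod.swap) = mergeSP π πs m := by
  ext c
  simp only [mem_merge, Finset.mem_image]
  constructor
  · rintro (⟨h, h'⟩ | ⟨h, h'⟩ | ⟨p, ⟨q, hq, rfl⟩, h⟩)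
    · exact Or.inr (Or.inl ⟨h, fun p hp => h' _ ⟨p, hp, rfl⟩⟩)
    · exact (Or.inl ⟨h, fun p hp => h' _ ⟨p, hp, rfl⟩⟩)
    · refine Or.inr (Or.inr ⟨q, hq, ?_⟩); rw [← h, Finset.union_comm]; rfl
  · rintro (⟨h, h'⟩ | ⟨h, h'⟩ | ⟨p, hq, h⟩)
    · refine Or.inr (Or.inl ⟨h, ?_⟩)
      rintro p ⟨q, hq, rfl⟩
      exact h' q hq
    · refine (Or.inl ⟨h, ?_⟩)
      rintro p ⟨q, hq, rfl⟩
      exact h' q hq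
    · refine Or.inr (Or.inr ⟨_, ⟨p, hq, rfl⟩, ?_⟩); rw [← h, Finset.union_comm]; rfl

theorem tr_merge (hπ : PartOn L π) (hs : PartOn H πs) (hd : Disjoint L H) (hm : MatchSP π πs m) :
    trX L (mergeSP π πs m) = π := by
  ext c
  rw [mem_trX]
  have key : ∀ p ∈ m, (p.1 ∪ p.2) ∩ L = p.1 := by
    intro p hp
    rw [Finset.union_inter_distrib_right, hπ.inter_left (hm.1 p hp).1,
      hs.inter_right hd (hm.1 p hp).2, Finset.union_empty]
  constructor
  · rintro ⟨⟨x, hx⟩, b, hb, rfl⟩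
    rcases mem_merge.1 hb with ⟨h, -⟩ | ⟨h, -⟩ | ⟨p, hp, rfl⟩
    · rwa [hπ.inter_left h]
    · rw [hs.inter_right hd h] at hx; simp at hx
    · rw [key p hp]; exact (hm.1 p hp).1
  · intro hc
    refine ⟨hπ.ne hc, ?_⟩
    by_cases h : ∃ p ∈ m, p.1 = c
    · obtain ⟨p, hp, rfl⟩ := h
      exact ⟨_, mem_merge.2 (Or.inr (Or.inr ⟨p, hp, rfl⟩)), key p hp⟩
    · push Not at h
      exact ⟨c, mem_merge.2 (Or.inl ⟨hc, h⟩), hπ.inter_left hc⟩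

theorem tr_merge' (hπ : PartOn L π) (hs : PartOn H πs) (hd : Disjoint L H) (hm : MatchSP π πs m) :
    trX H (mergeSP π πs m) = πs := by
  rw [← merge_swap]; exact tr_merge hs hπ hd.symm (match_swap hm)

theorem merge_biUnion (hπ : PartOn L π) (hs : PartOn H πs) (hm : MatchSP π πs m) :
    (mergeSP π πs m).biUnion id = L ∪ H := by
  ext x
  simp only [Finset.mem_biUnion, id, Finset.mem_union]
  constructor
  · rintro ⟨b, hb, hx⟩
    rcases mem_merge.1 hb with ⟨h, -⟩ | ⟨h, -⟩ | ⟨p, hp, rfl⟩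
    · exact Or.inl (hπ.sub h hx)
    · exact Or.inr (hs.sub h hx)
    · rcases Finset.mem_union.1 hx with h | h
      · exact Or.inl (hπ.sub (hm.1 p hp).1 h)
      · exact Or.inr (hs.sub (hm.1 p hp).2 h)
  · rintro (hx | hx)
    · obtain ⟨b, hb, hxb⟩ := hπ.ex hx
      by_cases h : ∃ p ∈ m, p.1 = b
      · obtain ⟨p, hp, rfl⟩ := h
        exact ⟨_, mem_merge.2 (Or.inr (Or.inr ⟨p, hp, rfl⟩)), Finset.mem_union_left _ hxb⟩
      · push Not at h
        exact ⟨b, mem_merge.2 (Or.inl ⟨hb, h⟩), hxb⟩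
    · obtain ⟨b, hb, hxb⟩ := hs.ex hx
      by_cases h : ∃ p ∈ m, p.2 = b
      · obtain ⟨p, hp, rfl⟩ := h
        exact ⟨_, mem_merge.2 (Or.inr (Or.inr ⟨p, hp, rfl⟩)), Finset.mem_union_right _ hxb⟩
      · push Not at h
        exact ⟨b, mem_merge.2 (Or.inr (Or.inl ⟨hb, h⟩)), hxb⟩

theorem mem_match (hπ : PartOn L π) (hs : PartOn H πs) (hd : Disjoint L H) (hm : MatchSP π πs m)
    (p) : p ∈ m ↔ p.1 ∈ π ∧ p.2 ∈ πs ∧ p.1 ∪ p.2 ∈ mergeSP π πs m := by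
  constructor
  · intro hp
    exact ⟨(hm.1 p hp).1, (hm.1 p hp).2, mem_merge.2 (Or.inr (Or.inr ⟨p, hp, rfl⟩))⟩
  · rintro ⟨h1, h2, h3⟩
    obtain ⟨x, hx⟩ := hπ.ne h1
    obtain ⟨y, hy⟩ := hs.ne h2
    have hxL := hπ.sub h1 hx
    have hyH := hs.sub h2 hy
    rcases mem_merge.1 h3 with ⟨h, -⟩ | ⟨h, -⟩ | ⟨q, hq, h⟩
    · exact absurd hyH (Finset.disjoint_left.1 hd (hπ.sub h (Finset.mem_union_right _ hy)))
    · exact absurd (hs.sub h (Finset.mem_union_left _ hx)) (Finset.disjoint_left.1 hd hxL)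
    · have e1 : q.1 = p.1 := by
        have := congrArg (· ∩ L) h
        simpa only [Finset.union_inter_distrib_right, hπ.inter_left h1, hs.inter_right hd h2,
          hπ.inter_left (hm.1 q hq).1, hs.inter_right hd (hm.1 q hq).2, Finset.union_empty] using this
      have e2 : q.2 = p.2 := by
        have := congrArg (· ∩ H) h
        simpa only [Finset.union_inter_distrib_right, hs.inter_left h2, hπ.inter_right hd.symm h1,
          hs.inter_left (hm.1 q hq).2, hπ.inter_right hd.symm (hm.1 q hq).1,
          Finset.empty_union] using this
      rwa [← Prod.ext e1 e2]

theorem match_unique {m' : Finset (Finset ℕ × Finset ℕ)}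
    (hπ : PartOn L π) (hs : PartOn H πs) (hd : Disjoint L H) (hm : MatchSP π πs m)
    (hm' : MatchSP π πs m') (h : mergeSP π πs m = mergeSP π πs m') : m = m' := by
  ext p
  rw [mem_match hπ hs hd hm, mem_match hπ hs hd hm', h]

theorem match_exists {ρ : Finset (Finset ℕ)} (hd : Disjoint L H) (hρ : PartOn (L ∪ H) ρ) :
    ∃ m, MatchSP (trX L ρ) (trX H ρ) m ∧ mergeSP (trX L ρ) (trX H ρ) m = ρ := by
  have hdl := Finset.disjoint_left.1 hd
  have subL : ∀ {L c}, c ∈ trX L ρ → ∀ x ∈ c, x ∈ L := by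
    intro L c hc x hx
    obtain ⟨-, b, -, rfl⟩ := mem_trX.1 hc
    exact Finset.mem_of_mem_inter_right hx
  have hE : ∀ {L c}, c ∈ trX L ρ → ∃ x, x ∈ c := fun hc => (mem_trX.1 hc).1
  have hsplit : ∀ b ∈ ρ, b ∩ L ∪ b ∩ H = b := by
    intro b hb
    rw [← Finset.inter_union_distrib_left]
    exact Finset.inter_eq_left.2 (hρ.sub hb)
  have hemp : ∀ c : Finset ℕ, c = ∅ ∨ ∃ x, x ∈ c := Finset.eq_empty_or_nonempty
  classical
  refine ⟨(trX L ρ ×ˢ trX H ρ).filter (fun p => p.1 ∪ p.2 ∈ ρ), ⟨?_, ?_⟩, ?_⟩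
  · intro p hp
    simp only [Finset.mem_filter, Finset.mem_product] at hp
    exact hp.1
  · intro p hp q hq h
    simp only [Finset.mem_filter, Finset.mem_product] at hp hq
    have hu : p.1 ∪ p.2 = q.1 ∪ q.2 := by
      rcases h with h | h
      · obtain ⟨x, hx⟩ := hE hp.1.1
        exact hρ.eq hp.2 hq.2 (Finset.mem_union_left _ hx) (Finset.mem_union_left _ (h ▸ hx))
      · obtain ⟨x, hx⟩ := hE hp.1.2
        exact hρ.eq hp.2 hq.2 (Finset.mem_union_right _ hx) (Finset.mem_union_right _ (h ▸ hx))
    have h1 := subL hp.1.1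
    have h2 := subL hp.1.2
    have h3 := subL hq.1.1
    have h4 := subL hq.1.2
    rw [Finset.ext_iff] at hu
    simp only [Finset.mem_union] at hu
    apply Prod.ext
    · ext x
      have := @hdl x
      have := hu x
      have := h1 x
      have := h2 x
      have := h3 x
      have := h4 x
      tauto
    · ext x
      have := @hdl x
      have := hu x
      have := h1 x
      have := h2 x
      have := h3 x
      have := h4 x
      tauto
  · ext c
    rw [mem_merge]
    simp only [Finset.mem_filter, Finset.mem_product]
    constructor
    · rintro (⟨h, h'⟩ | ⟨h, h'⟩ | ⟨p, hp, rfl⟩)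
      · obtain ⟨hx, b, hb, rfl⟩ := mem_trX.1 h
        rcases hemp (b ∩ H) with h0 | h0
        · have := hsplit b hb
          rw [h0, Finset.union_empty] at this
          rwa [this]
        · exact absurd rfl (h' (b ∩ L, b ∩ H)
            ⟨⟨h, mem_trX.2 ⟨h0, b, hb, rfl⟩⟩, by simpa only [hsplit b hb] using hb⟩)
      · obtain ⟨hx, b, hb, rfl⟩ := mem_trX.1 h
        rcases hemp (b ∩ L) with h0 | h0
        · have := hsplit b hb
          rw [h0, Finset.empty_union] at this
          rwa [this]
        · exact absurd rfl (h' (b ∩ L, b ∩ H)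
            ⟨⟨mem_trX.2 ⟨h0, b, hb, rfl⟩, h⟩, by simpa only [hsplit b hb] using hb⟩)
      · exact hp.2
    · intro hc
      have hs := hsplit c hc
      rcases hemp (c ∩ L) with h0 | h0
      · right; left
        rw [h0, Finset.empty_union] at hs
        refine ⟨mem_trX.2 ⟨hρ.ne hc, c, hc, hs⟩, ?_⟩
        rintro p ⟨hp, hp'⟩ rfl
        obtain ⟨x, hx⟩ := hρ.ne hc
        obtain ⟨y, hy⟩ := hE hp.1
        have := hρ.eq hp' hc (Finset.mem_union_right _ hx) hx
        have hy' : y ∈ p.2 := this ▸ Finset.mem_union_left _ hy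
        exact hdl (subL hp.1 y hy) (subL hp.2 y hy')
      · rcases hemp (c ∩ H) with h1 | h1
        · left
          rw [h1, Finset.union_empty] at hs
          refine ⟨mem_trX.2 ⟨hρ.ne hc, c, hc, hs⟩, ?_⟩
          rintro p ⟨hp, hp'⟩ rfl
          obtain ⟨x, hx⟩ := hρ.ne hc
          obtain ⟨y, hy⟩ := hE hp.2
          have := hρ.eq hp' hc (Finset.mem_union_left _ hx) hx
          have hy' : y ∈ p.1 := this ▸ Finset.mem_union_right _ hy
          exact hdl (subL hp.1 y hy') (subL hp.2 y hy)
        · right; right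
          exact ⟨(c ∩ L, c ∩ H), ⟨⟨mem_trX.2 ⟨h0, c, hc, rfl⟩, mem_trX.2 ⟨h1, c, hc, rfl⟩⟩,
            by simpa only [hs] using hc⟩, hs⟩

theorem card_merge (hm : MatchSP π πs m) :
    (mergeSP π πs m).card + m.card ≤ π.card + πs.card := by
  have h1 : (m.image Prod.fst).card = m.card :=
    Finset.card_image_of_injOn fun p hp q hq h => hm.2 p hp q hq (Or.inl h)
  have h2 : (m.image Prod.snd).card = m.card :=
    Finset.card_image_of_injOn fun p hp q hq h => hm.2 p hp q hq (Or.inr h)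
  have h3 : m.image Prod.fst ⊆ π := by
    intro x hx
    obtain ⟨p, hp, rfl⟩ := Finset.mem_image.1 hx
    exact (hm.1 p hp).1
  have h4 : m.image Prod.snd ⊆ πs := by
    intro x hx
    obtain ⟨p, hp, rfl⟩ := Finset.mem_image.1 hx
    exact (hm.1 p hp).2
  have h5 := Finset.card_sdiff_add_card_eq_card h3
  have h6 := Finset.card_sdiff_add_card_eq_card h4
  have h7 : (m.image fun p => p.1 ∪ p.2).card ≤ m.card := Finset.card_image_le
  have h8 := Finset.card_union_le ((π \ m.image Prod.fst) ∪ (πs \ m.image Prod.snd))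
    (m.image fun p => p.1 ∪ p.2)
  have h9 := Finset.card_union_le (π \ m.image Prod.fst) (πs \ m.image Prod.snd)
  unfold mergeSP
  omega
end

def cutX (n k : ℕ) (b : Finset ℕ) : Finset ℕ := (Finset.Icc 1 k).filter (fun x => x + n ∈ b)

def rstX (n k : ℕ) (ρ : Finset (Finset ℕ)) : Finset (Finset ℕ) := (ρ.image (cutX n k)).erase ∅

theorem mem_cutX {n k b x} : x ∈ cutX n k b ↔ (1 ≤ x ∧ x ≤ k) ∧ x + n ∈ b := by
  simp [cutX]

theorem mem_rstX {n k ρ c} : c ∈ rstX n k ρ ↔ (∃ x, x ∈ c) ∧ ∃ b ∈ ρ, cutX n k b = c := by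
  simp only [rstX, Finset.mem_erase, Finset.mem_image, ← Finset.nonempty_iff_ne_empty]
  rfl

theorem cut_cut {n k i j b} (h : i + j ≤ k) : cutX i j (cutX n k b) = cutX (n + i) j b := by
  ext x
  simp only [mem_cutX]
  have : x + i + n = x + (n + i) := by omega
  rw [this]
  constructor
  · tauto
  · rintro ⟨h1, h2⟩
    exact ⟨h1, by omega, h2⟩

theorem rst_rst {n k i j ρ} (h : i + j ≤ k) : rstX i j (rstX n k ρ) = rstX (n + i) j ρ := by
  ext c
  simp only [mem_rstX]
  constructor
  · rintro ⟨hc, b, ⟨hb, a, ha, rfl⟩, rfl⟩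
    exact ⟨hc, a, ha, (cut_cut h).symm⟩
  · rintro ⟨⟨x, hx⟩, a, ha, rfl⟩
    refine ⟨⟨x, hx⟩, cutX n k a, ⟨⟨x + i, ?_⟩, a, ha, rfl⟩, cut_cut h⟩
    rw [← cut_cut h] at hx
    exact (mem_cutX.1 hx).2

theorem rst_part {n k N ρ} (hρ : PartOn (Finset.Icc 1 N) ρ) (h : n + k ≤ N) :
    PartOn (Finset.Icc 1 k) (rstX n k ρ) := by
  apply PartOn.mk'
  · intro h0
    obtain ⟨⟨x, hx⟩, -⟩ := mem_rstX.1 h0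
    simp at hx
  · intro b hb c hc x hxb hxc
    obtain ⟨-, b', hb', rfl⟩ := mem_rstX.1 hb
    obtain ⟨-, c', hc', rfl⟩ := mem_rstX.1 hc
    rw [hρ.eq hb' hc' (mem_cutX.1 hxb).2 (mem_cutX.1 hxc).2]
  · intro b hb x hx
    obtain ⟨-, b', hb', rfl⟩ := mem_rstX.1 hb
    exact Finset.mem_Icc.2 (mem_cutX.1 hx).1
  · intro x hx
    rw [Finset.mem_Icc] at hx
    obtain ⟨b, hb, hxb⟩ := hρ.ex (x := x + n) (by rw [Finset.mem_Icc]; omega)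
    have : x ∈ cutX n k b := mem_cutX.2 ⟨hx, hxb⟩
    exact ⟨cutX n k b, mem_rstX.2 ⟨⟨x, this⟩, b, hb, rfl⟩, this⟩

theorem rst_zero {k ρ} : rstX 0 k ρ = trX (Finset.Icc 1 k) ρ := by
  unfold rstX trX
  congr 1
  congr 1
  funext b
  ext x
  simp [mem_cutX, and_comm]

theorem mem_shift {n π c} : c ∈ shiftSP n π ↔ ∃ b ∈ π, b.image (· + n) = c := by
  simp [shiftSP]

theorem shift_inj (n) : Function.Injective (shiftSP n) :=
  Finset.image_injective (Finset.image_injective (add_left_injective n))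

theorem shift_card (n π) : (shiftSP n π).card = π.card :=
  Finset.card_image_of_injective _ (Finset.image_injective (add_left_injective n))

theorem shift_shift (n k π) : shiftSP n (shiftSP k π) = shiftSP (k + n) π := by
  unfold shiftSP
  rw [Finset.image_image]
  congr 1
  funext b
  simp only [Function.comp, Finset.image_image]
  congr 1
  funext x
  simp only [Function.comp, add_assoc]

theorem shift_union (n π π') : shiftSP n (π ∪ π') = shiftSP n π ∪ shiftSP n π' :=
  Finset.image_union _ _

theorem image_cut {n k b} : (cutX n k b).image (· + n) = b ∩ Finset.Ioc n (n + k) := by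
  ext x
  simp only [Finset.mem_image, mem_cutX, Finset.mem_inter, Finset.mem_Ioc]
  constructor
  · rintro ⟨y, ⟨h, h'⟩, rfl⟩
    exact ⟨h', by omega⟩
  · rintro ⟨h, h'⟩
    exact ⟨x - n, ⟨by omega, by rwa [Nat.sub_add_cancel (by omega)]⟩, by omega⟩

theorem shift_rst {n k ρ} : shiftSP n (rstX n k ρ) = trX (Finset.Ioc n (n + k)) ρ := by
  ext c
  simp only [mem_shift, mem_rstX, mem_trX]
  constructor
  · rintro ⟨b, ⟨⟨x, hx⟩, a, ha, rfl⟩, rfl⟩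
    exact ⟨⟨x + n, Finset.mem_image_of_mem _ hx⟩, a, ha, image_cut.symm⟩
  · rintro ⟨⟨x, hx⟩, a, ha, rfl⟩
    rw [← image_cut] at hx
    obtain ⟨y, hy, -⟩ := Finset.mem_image.1 hx
    exact ⟨cutX n k a, ⟨⟨y, hy⟩, a, ha, rfl⟩, image_cut⟩

theorem shift_part {n k π} (h : PartOn (Finset.Icc 1 k) π) :
    PartOn (Finset.Ioc n (n + k)) (shiftSP n π) := by
  apply PartOn.mk'
  · intro h0
    obtain ⟨b, hb, h0⟩ := mem_shift.1 h0
    rw [Finset.image_eq_empty] at h0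
    exact h.1 (h0 ▸ hb)
  · intro b hb c hc x hxb hxc
    obtain ⟨b, hb', rfl⟩ := mem_shift.1 hb
    obtain ⟨c, hc', rfl⟩ := mem_shift.1 hc
    obtain ⟨y, hy, rfl⟩ := Finset.mem_image.1 hxb
    obtain ⟨z, hz, hzy⟩ := Finset.mem_image.1 hxc
    have : z = y := by simpa using hzy
    subst this
    rw [h.eq hb' hc' hy hz]
  · intro b hb x hx
    obtain ⟨b, hb', rfl⟩ := mem_shift.1 hb
    obtain ⟨y, hy, rfl⟩ := Finset.mem_image.1 hx
    have := Finset.mem_Icc.1 (h.sub hb' hy)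
    rw [Finset.mem_Ioc]; omega
  · intro x hx
    rw [Finset.mem_Ioc] at hx
    obtain ⟨b, hb, hxb⟩ := h.ex (x := x - n) (by rw [Finset.mem_Icc]; omega)
    exact ⟨_, mem_shift.2 ⟨b, hb, rfl⟩, Finset.mem_image.2 ⟨_, hxb, by omega⟩⟩

theorem disj_LH (n k : ℕ) : Disjoint (Finset.Icc 1 n) (Finset.Ioc n (n + k)) := by
  rw [Finset.disjoint_left]
  intro x h1 h2
  rw [Finset.mem_Icc] at h1
  rw [Finset.mem_Ioc] at h2
  omega

theorem union_LH (n k : ℕ) :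
    Finset.Icc 1 n ∪ Finset.Ioc n (n + k) = Finset.Icc 1 (n + k) := by
  ext x
  simp only [Finset.mem_union, Finset.mem_Icc, Finset.mem_Ioc]
  omega

def PSP (a b ρ : Finset (Finset ℕ)) : Prop :=
  spn ρ = spn a + spn b ∧ rstX 0 (spn a) ρ = a ∧ rstX (spn a) (spn b) ρ = b

theorem PSP_of_match {a b : Finset (Finset ℕ)} (ha : IsSP a) (hb : IsSP b) {m}
    (hm : MatchSP a (shiftSP (spn a) b) m) : PSP a b (mergeSP a (shiftSP (spn a) b) m) := by
  have h1 := ha.part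
  have h2 := shift_part (n := spn a) hb.part
  have hd := disj_LH (spn a) (spn b)
  refine ⟨?_, ?_, ?_⟩
  · rw [spn, merge_biUnion h1 h2 hm, union_LH]; simp
  · rw [rst_zero, tr_merge h1 h2 hd hm]
  · apply shift_inj (spn a)
    rw [shift_rst, tr_merge' h1 h2 hd hm]

theorem match_of_PSP {a b ρ : Finset (Finset ℕ)} (hρ : IsSP ρ) (h : PSP a b ρ) :
    ∃ m, MatchSP a (shiftSP (spn a) b) m ∧ mergeSP a (shiftSP (spn a) b) m = ρ := by
  obtain ⟨h1, h2, h3⟩ := h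
  have hp := hρ.part
  rw [h1, ← union_LH] at hp
  have := match_exists (disj_LH (spn a) (spn b)) hp
  rw [← rst_zero, ← shift_rst, h2, h3] at this
  exact this

open scoped Classical in
theorem mkSP_apply (x : Finset (Finset ℕ)) (ρ : SP) : mkSP x ρ = if x = ρ.1 then 1 else 0 := by
  unfold mkSP
  by_cases h : IsSP x
  · rw [dif_pos h, Finsupp.single_apply]
    congr 1
    rw [← Subtype.coe_inj]
  · rw [dif_neg h, if_neg]
    · rfl
    · rintro rfl; exact h ρ.2

open scoped Classical in
theorem mulfun_apply (a b ρ : SP) : mulfunSP a b ρ = if PSP a.1 b.1 ρ.1 then 1 else 0 := by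
  unfold mulfunSP
  rw [Finsupp.finsetSum_apply]
  simp only [mkSP_apply]
  have hmem : ∀ m, m ∈ matchingsSP a.1 (shiftSP (spn a.1) b.1) ↔
      MatchSP a.1 (shiftSP (spn a.1) b.1) m := by
    intro m
    simp only [matchingsSP, Finset.mem_filter, Finset.mem_powerset, and_iff_right_iff_imp]
    intro hm p hp
    exact Finset.mem_product.2 (hm.1 p hp)
  split_ifs with h
  · obtain ⟨m, hm, hmρ⟩ := match_of_PSP ρ.2 h
    rw [Finset.sum_eq_single m]
    · rw [if_pos hmρ]
    · intro m' hm' hne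
      rw [if_neg]
      intro h'
      exact hne (match_unique a.2.part (shift_part b.2.part) (disj_LH _ _) ((hmem m').1 hm') hm
        (h'.trans hmρ.symm))
    · intro h'
      exact absurd ((hmem m).2 hm) h'
  · apply Finset.sum_eq_zero
    intro m hm
    rw [if_neg]
    intro h'
    exact h (h' ▸ PSP_of_match a.2 b.2 ((hmem m).1 hm))

theorem liftW_single {V : Type*} [AddCommMonoid V] [Module ℂ V] (f : SP → V) (a : SP) (c : ℂ) :
    liftW f (Finsupp.single a c) = c • f a := by
  simp [liftW]

theorem mulW_single (a b : SP) :
    mulW (Finsupp.single a 1) (Finsupp.single b 1) = mulfunSP a b := by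
  simp [mulW, liftW_single]

theorem mulW_single' (a b : SP) (c : ℂ) :
    mulW (Finsupp.single a 1) (Finsupp.single b c) = c • mulfunSP a b := by
  simp [mulW, liftW_single]

theorem mulW_single'' (a b : SP) (c : ℂ) :
    mulW (Finsupp.single b c) (Finsupp.single a 1) = c • mulfunSP b a := by
  simp [mulW, liftW_single]

def rstSP (n k : ℕ) (ρ : SP) (h : n + k ≤ spn ρ.1) : SP := ⟨rstX n k ρ.1, (rst_part ρ.2.part h).isSP⟩

theorem spn_rst (n k : ℕ) (ρ : SP) (h : n + k ≤ spn ρ.1) : spn (rstX n k ρ.1) = k :=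
  (rst_part ρ.2.part h).spn

open scoped Classical in
theorem mulL_apply (a : SP) (x : WS) (ρ : SP) : mulW (Finsupp.single a 1) x ρ =
    if h : spn a.1 ≤ spn ρ.1 ∧ rstX 0 (spn a.1) ρ.1 = a.1 then
      x (rstSP (spn a.1) (spn ρ.1 - spn a.1) ρ (by omega)) else 0 := by
  induction x using Finsupp.induction_linear with
  | zero => simp
  | add x y hx hy =>
    rw [map_add, Finsupp.add_apply, hx, hy]
    split_ifs <;> simp
  | single b c =>
    rw [mulW_single', Finsupp.smul_apply, mulfun_apply]
    split_ifs with h h' h'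
    · obtain ⟨h1, h2, h3⟩ := h
      have : b = rstSP (spn a.1) (spn ρ.1 - spn a.1) ρ (by omega) := by
        apply Subtype.ext
        simp only [rstSP]
        rw [h1, Nat.add_sub_cancel_left, h3]
      rw [← this]; simp
    · exact absurd ⟨by have := h.1; omega, h.2.1⟩ h'
    · rw [Finsupp.single_apply, if_neg]
      · simp
      · intro hb
        have hb' : b.1 = rstX (spn a.1) (spn ρ.1 - spn a.1) ρ.1 := congrArg Subtype.val hb
        have hs : spn b.1 = spn ρ.1 - spn a.1 := by
          rw [hb']; exact spn_rst _ _ ρ (by omega)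
        exact h ⟨by omega, h'.2, by rw [hs, ← hb']⟩
    · simp

open scoped Classical in
theorem mulR_apply (a : SP) (x : WS) (ρ : SP) : mulW x (Finsupp.single a 1) ρ =
    if h : spn a.1 ≤ spn ρ.1 ∧ rstX (spn ρ.1 - spn a.1) (spn a.1) ρ.1 = a.1 then
      x (rstSP 0 (spn ρ.1 - spn a.1) ρ (by omega)) else 0 := by
  induction x using Finsupp.induction_linear with
  | zero => simp
  | add x y hx hy =>
    rw [map_add, LinearMap.add_apply, Finsupp.add_apply, hx, hy]
    split_ifs <;> simp
  | single b c =>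
    rw [mulW_single'', Finsupp.smul_apply, mulfun_apply]
    split_ifs with h h' h'
    · obtain ⟨h1, h2, h3⟩ := h
      have : b = rstSP 0 (spn ρ.1 - spn a.1) ρ (by omega) := by
        apply Subtype.ext
        simp only [rstSP]
        rw [h1, Nat.add_sub_cancel, h2]
      rw [← this]; simp
    · have h1 := h.1
      refine absurd ⟨by omega, ?_⟩ h'
      rw [h1, Nat.add_sub_cancel, h.2.2]
    · rw [Finsupp.single_apply, if_neg]
      · simp
      · intro hb
        have hb' : b.1 = rstX 0 (spn ρ.1 - spn a.1) ρ.1 := congrArg Subtype.val hb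
        have hs : spn b.1 = spn ρ.1 - spn a.1 := by
          rw [hb']; exact spn_rst _ _ ρ (by omega)
        exact h ⟨by omega, by rw [hs, ← hb'], by rw [hs]; exact h'.2⟩
    · simp

theorem assoc_basis (a b c : SP) :
    mulW (mulfunSP a b) (Finsupp.single c 1) = mulW (Finsupp.single a 1) (mulfunSP b c) := by
  classical
  ext ρ
  rw [mulL_apply, mulR_apply]
  simp only [mulfun_apply]
  by_cases hlen : spn ρ.1 = spn a.1 + spn b.1 + spn c.1
  · have e1 : spn ρ.1 - spn c.1 = spn a.1 + spn b.1 := by omega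
    have e2 : spn ρ.1 - spn a.1 = spn b.1 + spn c.1 := by omega
    have l1 : spn c.1 ≤ spn ρ.1 := by omega
    have l2 : spn a.1 ≤ spn ρ.1 := by omega
    simp only [rstSP, PSP, e1, e2, l1, l2, true_and]
    rw [spn_rst 0 _ ρ (by omega), spn_rst (spn a.1) _ ρ (by omega), rst_rst (by omega),
      rst_rst (by omega), rst_rst (by omega), rst_rst (by omega)]
    simp only [zero_add, add_zero, true_and, dite_eq_ite, ← ite_and]
    congr 1
    apply propext
    tauto
  · have hl : ∀ h : spn c.1 ≤ spn ρ.1, ¬ PSP a.1 b.1 (rstX 0 (spn ρ.1 - spn c.1) ρ.1) := by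
      intro h hP
      have h1 := hP.1
      rw [spn_rst 0 _ ρ (by omega)] at h1
      omega
    have hr : ∀ h : spn a.1 ≤ spn ρ.1,
        ¬ PSP b.1 c.1 (rstX (spn a.1) (spn ρ.1 - spn a.1) ρ.1) := by
      intro h hP
      have h1 := hP.1
      rw [spn_rst _ _ ρ (by omega)] at h1
      omega
    split_ifs with h h1 h2 h3 h4 h5
    all_goals first | rfl | (exfalso; first | exact hl h.1 ‹_› | exact hr (And.left ‹_›) ‹_›)

theorem mulW_assoc (x y z : WS) : mulW (mulW x y) z = mulW x (mulW y z) := by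
  induction x using Finsupp.induction_linear with
  | zero => simp
  | add x x' hx hx' => simp only [map_add, LinearMap.add_apply, hx, hx']
  | single a r =>
  induction y using Finsupp.induction_linear with
  | zero => simp
  | add x x' hx hx' => simp only [map_add, LinearMap.add_apply, hx, hx']
  | single b s =>
  induction z using Finsupp.induction_linear with
  | zero => simp
  | add x x' hx hx' => simp only [map_add, hx, hx']
  | single c t =>
    have e : ∀ (a : SP) (r : ℂ), (Finsupp.single a r : WS) = r • Finsupp.single a 1 := by
      intro a r; simp
    rw [e a, e b, e c]
    simp only [map_smul, LinearMap.smul_apply, mulW_single, assoc_basis]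

theorem spn_empty : spn ∅ = 0 := rfl

theorem mulW_unit (x : WS) : mulW unitW x = x := by
  ext ρ
  unfold unitW
  have hr : rstX 0 (spn ρ.1) ρ.1 = ρ.1 := by
    rw [rst_zero]
    ext c
    rw [mem_trX]
    have hp := ρ.2.part
    constructor
    · rintro ⟨-, b, hb, rfl⟩
      rwa [hp.inter_left hb]
    · intro hc
      exact ⟨hp.ne hc, c, hc, hp.inter_left hc⟩
  rw [mulL_apply, dif_pos]
  · congr 1
    exact Subtype.ext hr
  · refine ⟨Nat.zero_le _, ?_⟩
    change rstX 0 0 ρ.1 = ∅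
    apply Finset.eq_empty_of_forall_notMem
    intro c hc
    obtain ⟨⟨x, hx⟩, b, hb, rfl⟩ := mem_rstX.1 hc
    have := (mem_cutX.1 hx).1
    omega

theorem wordProd_cons (g : GSP) (l : List GSP) :
    wordProdW (g :: l) = mulW (Finsupp.single g.1 1) (wordProdW l) := rfl

theorem wordProd_append (u v : List GSP) :
    wordProdW (u ++ v) = mulW (wordProdW u) (wordProdW v) := by
  induction u with
  | nil => exact (mulW_unit _).symm
  | cons g u ih => rw [List.cons_append, wordProd_cons, wordProd_cons, ih, mulW_assoc]

theorem Psi_single (u : List GSP) (c : ℂ) : PsiW (Finsupp.single u c) = c • wordProdW u := by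
  simp [PsiW]

theorem match_empty (π πs) : MatchSP π πs ∅ := by simp [MatchSP]

theorem merge_empty (π πs) : mergeSP π πs ∅ = π ∪ πs := by simp [mergeSP]

theorem PSP_uplus {a b : Finset (Finset ℕ)} (ha : IsSP a) (hb : IsSP b) : PSP a b (uplusSP a b) := by
  have := PSP_of_match ha hb (match_empty _ _)
  rwa [merge_empty] at this

theorem uplus_isSP {a b : Finset (Finset ℕ)} (ha : IsSP a) (hb : IsSP b) : IsSP (uplusSP a b) := by
  have h1 := ha.part
  have h2 := shift_part (n := spn a) hb.part
  have hd := Finset.disjoint_left.1 (disj_LH (spn a) (spn b))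
  apply PartOn.isSP (n := spn a + spn b)
  rw [← union_LH]
  unfold uplusSP
  apply PartOn.mk'
  · intro h
    rcases Finset.mem_union.1 h with h | h
    · exact h1.1 h
    · exact h2.1 h
  · intro c hc d hd' x hxc hxd
    rcases Finset.mem_union.1 hc with hc | hc <;> rcases Finset.mem_union.1 hd' with hd' | hd'
    · exact h1.eq hc hd' hxc hxd
    · exact absurd (h2.sub hd' hxd) (hd (h1.sub hc hxc))
    · exact absurd (h2.sub hc hxc) (hd (h1.sub hd' hxd))
    · exact h2.eq hc hd' hxc hxd
  · intro c hc x hx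
    rcases Finset.mem_union.1 hc with hc | hc
    · exact Finset.mem_union_left _ (h1.sub hc hx)
    · exact Finset.mem_union_right _ (h2.sub hc hx)
  · intro x hx
    rcases Finset.mem_union.1 hx with hx | hx
    · obtain ⟨b, hb, h⟩ := h1.ex hx
      exact ⟨b, Finset.mem_union_left _ hb, h⟩
    · obtain ⟨b, hb, h⟩ := h2.ex hx
      exact ⟨b, Finset.mem_union_right _ hb, h⟩

theorem card_uplus {a b : Finset (Finset ℕ)} (ha : IsSP a) (hb : IsSP b) :
    (uplusSP a b).card = a.card + b.card := by
  have h1 := ha.part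
  have h2 := shift_part (n := spn a) hb.part
  unfold uplusSP
  rw [Finset.card_union_of_disjoint, shift_card]
  rw [Finset.disjoint_left]
  intro c hc hc'
  obtain ⟨x, hx⟩ := h1.ne hc
  exact Finset.disjoint_left.1 (disj_LH (spn a) (spn b)) (h1.sub hc hx) (h2.sub hc' hx)

theorem uplus_assoc {a b c : Finset (Finset ℕ)} (ha : IsSP a) (hb : IsSP b) :
    uplusSP (uplusSP a b) c = uplusSP a (uplusSP b c) := by
  have h := (PSP_uplus ha hb).1
  conv_lhs => unfold uplusSP
  change uplusSP a b ∪ shiftSP (spn (uplusSP a b)) c = _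
  rw [h]
  unfold uplusSP
  rw [shift_union, shift_shift, Finset.union_assoc, add_comm (spn b)]

theorem uplus_empty_left (a : Finset (Finset ℕ)) : uplusSP ∅ a = a := by
  unfold uplusSP shiftSP
  rw [spn_empty]
  simp

theorem PSP_card {a b ρ : Finset (Finset ℕ)} (hρ : IsSP ρ) (h : PSP a b ρ) :
    ρ = uplusSP a b ∨ ρ.card < a.card + b.card := by
  obtain ⟨m, hm, rfl⟩ := match_of_PSP hρ h
  rcases Finset.eq_empty_or_nonempty m with rfl | hne
  · left; rw [merge_empty]; rfl
  · right
    have := card_merge hm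
    rw [shift_card] at this
    have := hne.card_pos
    omega

def upSP (a b : SP) : SP := ⟨uplusSP a.1 b.1, uplus_isSP a.2 b.2⟩

def eW : List GSP → SP
  | [] => ⟨∅, empty_isSP⟩
  | g :: l => upSP g.1 (eW l)

theorem wordProd_self (l : List GSP) : wordProdW l (eW l) = 1 := by
  induction l with
  | nil => simp [wordProdW, unitW, eW]
  | cons g l ih =>
    obtain ⟨h1, h2, h3⟩ := PSP_uplus g.1.2 (eW l).2
    change spn (eW (g :: l)).1 = _ at h1
    change rstX _ _ (eW (g :: l)).1 = _ at h2
    change rstX _ _ (eW (g :: l)).1 = _ at h3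
    rw [wordProd_cons, mulL_apply, dif_pos ⟨by omega, h2⟩, ← ih]
    congr 1
    apply Subtype.ext
    simp only [rstSP]
    rw [h1, Nat.add_sub_cancel_left, h3]

theorem wordProd_lt (l : List GSP) (ρ : SP) (h : wordProdW l ρ ≠ 0) :
    ρ = eW l ∨ ρ.1.card < (eW l).1.card := by
  classical
  induction l generalizing ρ with
  | nil =>
    left
    by_contra hne
    apply h
    change (Finsupp.single _ _ : WS) ρ = 0
    rw [Finsupp.single_apply, if_neg]
    exact fun h => hne h.symm
  | cons g l ih =>
    rw [wordProd_cons, mulL_apply] at h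
    split_ifs at h with hc
    · obtain ⟨h1, h2⟩ := hc
      set σ := rstSP (spn g.1.1) (spn ρ.1 - spn g.1.1) ρ (by omega) with hσ
      have hs : spn σ.1 = spn ρ.1 - spn g.1.1 := spn_rst _ _ ρ (by omega)
      have hP : PSP g.1.1 σ.1 ρ.1 := ⟨by omega, h2, by rw [hs]; rfl⟩
      have hcard : (eW (g :: l)).1.card = g.1.1.card + (eW l).1.card := card_uplus g.1.2 (eW l).2
      rcases ih σ h with e | e <;> rcases PSP_card ρ.2 hP with e' | e'
      · left
        apply Subtype.ext
        rw [e', e]; rfl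
      · right; rw [e] at e'; omega
      · right; rw [e', card_uplus g.1.2 σ.2]; omega
      · right; omega
    · exact absurd rfl h

theorem spn_pos {a : Finset (Finset ℕ)} (ha : IsSP a) (h : a ≠ ∅) : 0 < spn a := by
  obtain ⟨b, hb⟩ := Finset.nonempty_iff_ne_empty.2 h
  obtain ⟨x, hx⟩ := ha.part.ne hb
  have := Finset.mem_Icc.1 (ha.part.sub hb hx)
  omega

theorem eW_append (u v : List GSP) : eW (u ++ v) = upSP (eW u) (eW v) := by
  induction u with
  | nil => exact Subtype.ext (uplus_empty_left _).symm
  | cons g u ih =>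
    change upSP g.1 (eW (u ++ v)) = upSP (upSP g.1 (eW u)) (eW v)
    rw [ih]
    exact Subtype.ext (uplus_assoc g.1.2 (eW u).2).symm

theorem uplus_empty_right (a : Finset (Finset ℕ)) : uplusSP a ∅ = a := by
  simp [uplusSP, shiftSP]

theorem eW_surj : Function.Surjective eW := by
  suffices ∀ n (ρ : SP), spn ρ.1 = n → ∃ l, eW l = ρ from fun ρ => this _ ρ rfl
  intro n
  induction n using Nat.strong_induction_on with
  | _ n ih =>
  intro ρ hn
  by_cases h0 : ρ.1 = ∅
  · exact ⟨[], Subtype.ext h0.symm⟩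
  by_cases hi : IndivSP ρ.1
  · exact ⟨[⟨ρ, hi⟩], Subtype.ext (uplus_empty_right _)⟩
  · unfold IndivSP at hi
    push Not at hi
    obtain ⟨a, b, ha, hb, hab, hna, hnb⟩ := hi (Finset.nonempty_iff_ne_empty.2 h0)
    have hs := (PSP_uplus ha hb).1
    rw [← hab] at hs
    have ha0 : a ≠ ∅ := by
      rintro rfl
      rw [uplus_empty_left] at hab
      exact hnb hab.symm
    have hb0 : b ≠ ∅ := by
      rintro rfl
      rw [uplus_empty_right] at hab
      exact hna hab.symm
    have := spn_pos ha ha0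
    have := spn_pos hb hb0
    obtain ⟨u, hu⟩ := ih (spn a) (by omega) ⟨a, ha⟩ rfl
    obtain ⟨v, hv⟩ := ih (spn b) (by omega) ⟨b, hb⟩ rfl
    refine ⟨u ++ v, ?_⟩
    rw [eW_append, hu, hv]
    exact Subtype.ext hab.symm

theorem indiv_not_lt {a b c d : Finset (Finset ℕ)} (ha : IsSP a) (hb : IsSP b) (hc : IsSP c)
    (h : uplusSP a b = uplusSP c d) (ha0 : a ≠ ∅) (hci : IndivSP c) :
    ¬ spn a < spn c := by
  intro hlt
  have hx : PartOn (Finset.Icc 1 (spn c - spn a)) (rstX (spn a) (spn c - spn a) c) :=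
    rst_part hc.part (by omega)
  have hy : PartOn (Finset.Icc 1 (spn a)) (rstX 0 (spn a) c) :=
    rst_part hc.part (by omega)
  have hP : PSP (rstX 0 (spn a) c) (rstX (spn a) (spn c - spn a) c) c := by
    refine ⟨?_, ?_, ?_⟩
    · rw [hx.spn, hy.spn]; omega
    · rw [hy.spn]
    · rw [hx.spn, hy.spn]
  have hsub : c ⊆ uplusSP a b := h ▸ Finset.subset_union_left
  have hu : c = uplusSP (rstX 0 (spn a) c) (rstX (spn a) (spn c - spn a) c) := by
    obtain ⟨m, hm, hmc⟩ := match_of_PSP hc hP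
    have : m = ∅ := by
      apply Finset.eq_empty_of_forall_notMem
      intro p hp
      have h1 := hm.1 p hp
      have h2 : p.1 ∪ p.2 ∈ c := hmc ▸ mem_merge.2 (Or.inr (Or.inr ⟨p, hp, rfl⟩))
      obtain ⟨x, hx1⟩ := hy.ne h1.1
      have hx2 := Finset.mem_Icc.1 (hy.sub h1.1 hx1)
      have hsp := shift_part (n := spn a) hx
      rw [hy.spn] at h1
      obtain ⟨y, hy1⟩ := hsp.ne h1.2
      have hy2 := Finset.mem_Ioc.1 (hsp.sub h1.2 hy1)
      rcases Finset.mem_union.1 (hsub h2) with h3 | h3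
      · have := Finset.mem_Icc.1 (ha.part.sub h3 (Finset.mem_union_right _ hy1))
        omega
      · have := Finset.mem_Ioc.1 ((shift_part hb.part).sub h3 (Finset.mem_union_left _ hx1))
        omega
    rw [this, merge_empty] at hmc
    exact hmc.symm
  have hpos := spn_pos ha ha0
  rcases hci.2 _ _ hy.isSP hx.isSP hu with e | e
  · have := hy.spn
    rw [e] at this
    omega
  · have := hx.spn
    rw [e] at this
    omega

theorem eW_inj : Function.Injective eW := by
  intro u
  induction u with
  | nil =>
    rintro (_ | ⟨g, v⟩) h
    · rfl
    · have h' : ∅ = uplusSP g.1.1 (eW v).1 := congrArg Subtype.val h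
      have := Finset.union_eq_empty.1 h'.symm
      exact absurd this.1 g.2.1
  | cons g u ih =>
    rintro (_ | ⟨g', v⟩) h
    · have h' : uplusSP g.1.1 (eW u).1 = ∅ := congrArg Subtype.val h
      have := Finset.union_eq_empty.1 h'
      exact absurd this.1 g.2.1
    · have h' : uplusSP g.1.1 (eW u).1 = uplusSP g'.1.1 (eW v).1 := congrArg Subtype.val h
      have l1 := indiv_not_lt g.1.2 (eW u).2 g'.1.2 h' g.2.1 g'.2
      have l2 := indiv_not_lt g'.1.2 (eW v).2 g.1.2 h'.symm g'.2.1 g.2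
      have hs : spn g.1.1 = spn g'.1.1 := by omega
      obtain ⟨p1, p2, p3⟩ := PSP_uplus g.1.2 (eW u).2
      obtain ⟨q1, q2, q3⟩ := PSP_uplus g'.1.2 (eW v).2
      rw [h', q1] at p1
      have hs' : spn (eW u).1 = spn (eW v).1 := by omega
      rw [h', hs, q2] at p2
      rw [h', hs, hs', q3] at p3
      have e1 : g = g' := Subtype.ext (Subtype.ext p2.symm)
      have e2 : u = v := ih (Subtype.ext p3.symm)
      rw [e1, e2]

theorem Psi_apply (f : List GSP →₀ ℂ) (ρ : SP) : PsiW f ρ = f.sum fun w c => c * wordProdW w ρ := by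
  simp [PsiW, Finsupp.lsum_apply, Finsupp.sum, Finsupp.finsetSum_apply]

theorem Psi_inj : Function.Injective PsiW := by
  rw [injective_iff_map_eq_zero]
  intro f hf
  by_contra hne
  obtain ⟨w, hw, hmax⟩ := Finset.exists_max_image f.support (fun w => (eW w).1.card)
    (Finsupp.support_nonempty_iff.2 hne)
  have h := Psi_apply f (eW w)
  rw [hf, Finsupp.sum, Finset.sum_eq_single w, wordProd_self, mul_one] at h
  · exact (Finsupp.mem_support_iff.1 hw) h.symm
  · intro v hv hvw
    by_contra h0
    rcases wordProd_lt v (eW w) (right_ne_zero_of_mul h0) with e | e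
    · exact hvw (eW_inj e).symm
    · have := hmax v hv
      omega
  · intro h; exact absurd hw h

theorem Psi_surj : Function.Surjective PsiW := by
  rw [← LinearMap.range_eq_top]
  have key : ∀ n (ρ : SP), ρ.1.card = n → (Finsupp.single ρ 1 : WS) ∈ LinearMap.range PsiW := by
    intro n
    induction n using Nat.strong_induction_on with
    | _ n ih =>
    intro ρ hn
    obtain ⟨l, rfl⟩ := eW_surj ρ
    have hl : wordProdW l ∈ LinearMap.range PsiW := ⟨Finsupp.single l 1, by simp [Psi_single]⟩
    have hr : (wordProdW l).erase (eW l) ∈ LinearMap.range PsiW := by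
      rw [← Finsupp.sum_single ((wordProdW l).erase (eW l))]
      apply Submodule.sum_mem
      intro σ hσ
      rw [Finsupp.support_erase, Finset.mem_erase, Finsupp.mem_support_iff] at hσ
      rcases wordProd_lt l σ hσ.2 with e | e
      · exact absurd e hσ.1
      · have := Submodule.smul_mem _ (((wordProdW l).erase (eW l)) σ) (ih _ (by omega) σ rfl)
        simpa using this
    have := Finsupp.single_add_erase (eW l) (wordProdW l)
    rw [wordProd_self] at this
    rw [eq_sub_of_add_eq this]
    exact Submodule.sub_mem _ hl hr
  rw [eq_top_iff]
  intro x _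
  rw [← Finsupp.sum_single x]
  apply Submodule.sum_mem
  intro σ _
  have := Submodule.smul_mem _ (x σ) (key _ σ rfl)
  simpa using this

/-- `WSym` is free as an associative ℂ-algebra on the indivisible set
partitions: the unique unital algebra morphism `PsiW` (which is multiplicative and
unital) from the free associative algebra on the indivisible set partitions to
`WSym` sending each generator `π` to `M_π` is an isomorphism of algebras. -/
theorem wsym_free_on_indivisible :
    Function.Bijective PsiW ∧
    (∀ u v : List GSP,
      PsiW (Finsupp.single (u ++ v) 1) =
        mulW (PsiW (Finsupp.single u 1)) (PsiW (Finsupp.single v 1))) ∧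
    PsiW (Finsupp.single [] 1) = unitW := by
  refine ⟨⟨Psi_inj, Psi_surj⟩, ?_, ?_⟩
  · intro u v
    simp only [Psi_single, one_smul]
    exact wordProd_append u v
  · rw [Psi_single, one_smul]
    rfl
end
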